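/- arXiv:1604.04682 — 2 statements merged into one kernel-verified Lean document; each statement's English description precedes it below -/
import Mathlib

section
/- For every commutative ring R, every a ∈ R, and every natural number n, the n-th Dickson polynomial of the first kind D_n(x,a) satisfies the homogeneous polynomial differential identity (x² − 4a)·D_n''(x,a) + x·D_n'(x,a) − n²·D_n(x,a) = 0, where primes denote formal polynomial derivatives. -/
open Polynomial

/-!
Write `D n = dickson 1 a n` and `E n = dickson 2 a n`. The two kinds satisfy
`D (n + 1) = 2 E (n + 1) - x E n` and `D (n + 2) = x E (n + 1) - 2 a E n`, and
`D (n + 1)' = (n + 1) E n`. Differentiating the first two relations and eliminating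
`E (n + 1)'` between them gives `(x² - 4a) E n' = (n + 1) D (n + 1) - x E n`; multiplied by
`n + 1`, this is the differential equation for `D (n + 1)`.
-/

section Dickson

variable {R : Type*} [CommRing R] (a : R)

theorem dickson_succ_eq_dickson_two (k : ℕ) : ∀ n : ℕ,
    dickson k a (n + 1) =
      (3 - (k : R[X])) * dickson 2 a (n + 1) + ((k : R[X]) - 2) * (X * dickson 2 a n)
  | 0 => by
    simp only [zero_add, dickson_one, dickson_zero]
    push_cast
    ring
  | 1 => by
    simp only [dickson_add_two, zero_add, dickson_one, dickson_zero]
    push_cast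
    ring
  | n + 2 => by
    rw [dickson_add_two k a (n + 1), dickson_succ_eq_dickson_two k (n + 1),
      dickson_succ_eq_dickson_two k n, dickson_add_two 2 a (n + 1)]
    linear_combination (2 - (k : R[X])) * X * dickson_add_two 2 a n

theorem dickson_one_succ_eq_dickson_two (n : ℕ) :
    dickson 1 a (n + 1) = 2 * dickson 2 a (n + 1) - X * dickson 2 a n := by
  rw [dickson_succ_eq_dickson_two]
  push_cast
  ring

theorem dickson_one_add_two_eq_dickson_two (n : ℕ) :
    dickson 1 a (n + 2) = X * dickson 2 a (n + 1) - 2 * C a * dickson 2 a n := by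
  rw [dickson_one_succ_eq_dickson_two, dickson_add_two]
  ring

theorem derivative_dickson_one_succ : ∀ n : ℕ,
    derivative (dickson 1 a (n + 1)) = ((n : R[X]) + 1) * dickson 2 a n
  | 0 => by
    simp only [zero_add, dickson_one, dickson_zero, derivative_X]
    push_cast
    ring
  | 1 => by
    simp only [dickson_add_two, zero_add, dickson_one, dickson_zero, derivative_sub,
      derivative_mul, derivative_X, derivative_C, derivative_ofNat, derivative_natCast]
    push_cast
    ring
  | n + 2 => by
    rw [dickson_add_two 1 a (n + 1), dickson_add_two 2 a n]
    simp only [derivative_sub, derivative_mul, derivative_X, derivative_C]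
    rw [derivative_dickson_one_succ (n + 1), derivative_dickson_one_succ n]
    push_cast
    linear_combination dickson_one_add_two_eq_dickson_two a n

theorem X_sq_sub_C_mul_derivative_dickson_two (n : ℕ) :
    (X ^ 2 - C (4 * a)) * derivative (dickson 2 a n) =
      ((n : R[X]) + 1) * dickson 1 a (n + 1) - X * dickson 2 a n := by
  have hsucc : ((n : R[X]) + 1) * dickson 2 a n =
      2 * derivative (dickson 2 a (n + 1)) - dickson 2 a n - X * derivative (dickson 2 a n) := by
    rw [← derivative_dickson_one_succ, dickson_one_succ_eq_dickson_two]
    simp only [derivative_sub, derivative_mul, derivative_X, derivative_ofNat]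
    ring
  have hadd_two : ((n : R[X]) + 2) * dickson 2 a (n + 1) =
      dickson 2 a (n + 1) + X * derivative (dickson 2 a (n + 1))
        - 2 * C a * derivative (dickson 2 a n) := by
    have h := derivative_dickson_one_succ a (n + 1)
    rw [dickson_one_add_two_eq_dickson_two] at h
    simp only [derivative_sub, derivative_mul, derivative_X, derivative_C,
      derivative_ofNat] at h
    push_cast at h
    linear_combination -h
  rw [dickson_one_succ_eq_dickson_two, C_mul, C_ofNat]
  linear_combination X * hsucc - 2 * hadd_two

end Dickson

/-- The Dickson polynomials of the first kind `D n = dickson 1 a n` satisfy the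
homogeneous second-order differential identity
`(x² − 4a)·D_n'' + x·D_n' − n²·D_n = 0`. -/
theorem dickson_first_kind_ode (R : Type*) [CommRing R] (a : R) (n : ℕ) :
    (X ^ 2 - C (4 * a)) * derivative (derivative (dickson 1 a n))
      + X * derivative (dickson 1 a n)
      - (n : R[X]) ^ 2 * dickson 1 a n = 0 := by
  cases n with
  | zero => simp [derivative_ofNat]
  | succ m =>
    have hderiv : derivative (derivative (dickson 1 a (m + 1))) =
        ((m : R[X]) + 1) * derivative (dickson 2 a m) := by
      simp [derivative_dickson_one_succ]
    rw [hderiv, derivative_dickson_one_succ]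
    push_cast
    linear_combination ((m : R[X]) + 1) * X_sq_sub_C_mul_derivative_dickson_two a m
end

section
/- For every commutative ring R, every a ∈ R, and every natural number n, the n-th Dickson polynomial of the second kind satisfies the explicit formula E_n(x,a) = Σ_{i=0}^{⌊n/2⌋} C(n−i, i)·(−a)^i·x^{n−2i}, where C(·,·) denotes the binomial coefficient. -/
open Polynomial

/-!
Weight the diagonal sum `∑_{k+j=n} C(k, j)` of Pascal's triangle, which is a Fibonacci number, by
`b ^ j * x ^ (k - j)`. Pascal's rule turns the Fibonacci recurrence into
`u (n + 2) = x * u (n + 1) + b * u n`, which for `b = -a` is the recurrence of `dickson 2 a`. The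
terms with `j > k` vanish, which cuts the sum off at `j = ⌊n / 2⌋`.
-/

section Antidiagonal

open Finset.HasAntidiagonal (antidiagonal)

variable {A : Type*} [CommSemiring A]

theorem choose_succ_succ_mul_pow_mul_pow (x b : A) (k j : ℕ) :
    (k + 1).choose (j + 1) * b ^ (j + 1) * x ^ (k + 1 - (j + 1)) =
      x * (k.choose (j + 1) * b ^ (j + 1) * x ^ (k - (j + 1))) +
        b * (k.choose j * b ^ j * x ^ (k - j)) := by
  rw [Nat.choose_succ_succ', Nat.add_sub_add_right]
  obtain hkj | hjk := Nat.lt_or_ge k (j + 1)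
  · -- The exponent `k - (j + 1)` is truncated here, but its coefficient vanishes.
    rw [Nat.choose_eq_zero_of_lt hkj]
    push_cast
    ring
  · obtain ⟨d, rfl⟩ := Nat.exists_eq_add_of_le hjk
    have hd : j + 1 + d - j = d + 1 := by lia
    rw [hd, Nat.add_sub_cancel_left]
    push_cast
    ring

theorem sum_antidiagonal_choose_mul_pow_mul_pow_add_two (x b : A) (n : ℕ) :
    ∑ p ∈ antidiagonal (n + 2), p.1.choose p.2 * b ^ p.2 * x ^ (p.1 - p.2) =
      x * ∑ p ∈ antidiagonal (n + 1), p.1.choose p.2 * b ^ p.2 * x ^ (p.1 - p.2) +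
        b * ∑ p ∈ antidiagonal n, p.1.choose p.2 * b ^ p.2 * x ^ (p.1 - p.2) := by
  -- Removing both ends of diagonal `n + 2` and the end `j = 0` of diagonal `n + 1` makes all
  -- three sums range over diagonal `n`.
  rw [Finset.Nat.sum_antidiagonal_succ (n := n + 1), Finset.Nat.sum_antidiagonal_succ' (n := n),
    Finset.Nat.sum_antidiagonal_succ' (n := n)]
  simp only [choose_succ_succ_mul_pow_mul_pow, Finset.sum_add_distrib, ← Finset.mul_sum,
    Nat.choose_zero_succ, Nat.choose_zero_right, Nat.cast_zero, Nat.cast_one, Nat.sub_zero]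
  ring

theorem eq_sum_antidiagonal_choose_of_recurrence {u : ℕ → A} {x b : A} (zero : u 0 = 1)
    (one : u 1 = x) (add_two : ∀ n, u (n + 2) = x * u (n + 1) + b * u n) (n : ℕ) :
    u n = ∑ p ∈ antidiagonal n, p.1.choose p.2 * b ^ p.2 * x ^ (p.1 - p.2) := by
  induction n using Nat.twoStepInduction with
  | zero => simp [zero]
  | one => simp [one, Finset.Nat.antidiagonal_succ]
  | more n ih ih_succ =>
    rw [add_two, ih, ih_succ, sum_antidiagonal_choose_mul_pow_mul_pow_add_two]

theorem sum_antidiagonal_eq_sum_range_half {M : Type*} [AddCommMonoid M] {f : ℕ × ℕ → M}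
    (hf : ∀ p : ℕ × ℕ, p.1 < p.2 → f p = 0) (n : ℕ) :
    ∑ p ∈ antidiagonal n, f p = ∑ i ∈ Finset.range (n / 2 + 1), f (n - i, i) := by
  rw [← Finset.Nat.sum_antidiagonal_swap, Finset.Nat.sum_antidiagonal_eq_sum_range_succ_mk]
  symm
  apply Finset.sum_subset
  · exact Finset.range_subset_range.mpr (by lia)
  · intro i _ hi
    rw [Finset.mem_range] at hi
    exact hf _ (by dsimp only; lia)

end Antidiagonal

/-- Explicit formula for the Dickson polynomials of the second kind:
`E_n(x,a) = Σ_{i=0}^{⌊n/2⌋} C(n−i,i)·(−a)^i·x^{n−2i}`. -/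
theorem dickson_second_kind_explicit (R : Type*) [CommRing R] (a : R) (n : ℕ) :
    dickson 2 a n
      = ∑ i ∈ Finset.range (n / 2 + 1),
          C ((((n - i).choose i : ℕ) : R) * (-a) ^ i) * X ^ (n - 2 * i) := by
  have zero : dickson 2 a 0 = 1 := by rw [dickson_zero]; norm_num
  have add_two (m : ℕ) :
      dickson 2 a (m + 2) = X * dickson 2 a (m + 1) + C (-a) * dickson 2 a m := by
    rw [dickson_add_two, C_neg, neg_mul, sub_eq_add_neg]
  rw [eq_sum_antidiagonal_choose_of_recurrence zero (dickson_one 2 a) add_two,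
    sum_antidiagonal_eq_sum_range_half]
  · simp only [C_mul, C_pow, map_natCast, two_mul, Nat.sub_sub]
  · intro p hp
    rw [Nat.choose_eq_zero_of_lt hp, Nat.cast_zero, zero_mul, zero_mul]
end
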